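/- Let T be a noncrossing tree on [n+1], let T_1, …, T_k be the noncrossing alternating spanning trees of the transitive closure T̄, indexed so that P(T_1) <lex ⋯ <lex P(T_k). Then for every 2 ≤ m ≤ k there is a nonempty set E_m ⊆ E(T_m) such that P(T_m) ∩ (P(T_1) ∪ ⋯ ∪ P(T_{m−1})) = ⋃_{e ∈ E_m} P(T_m − e), where T_m − e denotes T_m with the edge e removed; i.e., the lexicographic order is a shelling order: each P(T_m) meets the union of its predecessors in a nonempty union of facets of the simplex P(T_m). -/

import Mathlib

open scoped BigOperators

namespace RPaper

abbrev Vtype (n : ℕ) := Fin (n+1) → ℝ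

abbrev Edge (n : ℕ) := Fin (n+1) × Fin (n+1)

abbrev EdgeSet (n : ℕ) := Finset (Edge n)

/-- The vector `e_i - e_j`. -/
def ev {n : ℕ} (i j : Fin (n+1)) : Vtype n := Pi.single i 1 - Pi.single j 1

/-- Edges are stored as pairs `(i,j)` with `i < j`. -/
def IsGraph {n : ℕ} (E : EdgeSet n) : Prop := ∀ e ∈ E, e.1 < e.2

/-- The simple graph underlying an edge set. -/
def toSG {n : ℕ} (E : EdgeSet n) : SimpleGraph (Fin (n+1)) :=
  SimpleGraph.fromRel (fun a b => (a, b) ∈ E)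

def Acyclic {n : ℕ} (E : EdgeSet n) : Prop := (toSG E).IsAcyclic

def IsForest {n : ℕ} (E : EdgeSet n) : Prop := IsGraph E ∧ Acyclic E

/-- A tree on the full vertex set `[n+1]`: connected and acyclic. -/
def IsTreeG {n : ℕ} (E : EdgeSet n) : Prop := IsGraph E ∧ (toSG E).IsTree

def Noncrossing {n : ℕ} (E : EdgeSet n) : Prop :=
  ¬ ∃ i j k l : Fin (n+1), i < j ∧ j < k ∧ k < l ∧ (i, k) ∈ E ∧ (j, l) ∈ E

def Alternating {n : ℕ} (E : EdgeSet n) : Prop :=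
  ¬ ∃ i j k : Fin (n+1), i < j ∧ j < k ∧ (i, j) ∈ E ∧ (j, k) ∈ E

/-- The positive roots `e_i - e_j`, `i < j`. -/
def PhiPlus (n : ℕ) : Set (Vtype n) := {v | ∃ i j : Fin (n+1), i < j ∧ v = ev i j}

/-- The cone of nonnegative combinations of the vectors of `E`. -/
def cone {n : ℕ} (E : EdgeSet n) : Set (Vtype n) :=
  {x | ∃ c : Edge n → ℝ, (∀ e, 0 ≤ c e) ∧ x = ∑ e ∈ E, c e • ev e.1 e.2}

def Vbar {n : ℕ} (E : EdgeSet n) : Set (Vtype n) := PhiPlus n ∩ cone E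

/-- The root polytope of a graph. -/
def RootPoly {n : ℕ} (E : EdgeSet n) : Set (Vtype n) := convexHull ℝ ({0} ∪ Vbar E)

/-- The full root polytope `P(A_n^+)`. -/
def FullRootPoly (n : ℕ) : Set (Vtype n) := convexHull ℝ ({0} ∪ PhiPlus n)

/-- Transitive closure: `(i,j)`, `i<j`, whenever there is an increasing path in `E`. -/
def closureT {n : ℕ} (E : EdgeSet n) : Set (Edge n) :=
  {p | p.1 < p.2 ∧ Relation.TransGen (fun a b => a < b ∧ (a, b) ∈ E) p.1 p.2}

/-- Noncrossing alternating spanning trees of the transitive closure of `E`. -/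
def NCASpanningTrees {n : ℕ} (E : EdgeSet n) : Set (EdgeSet n) :=
  {F | IsTreeG F ∧ Noncrossing F ∧ Alternating F ∧ ↑F ⊆ closureT E}

/-- The `t`-th dilate of a set. -/
def dilate {n : ℕ} (t : ℕ) (P : Set (Vtype n)) : Set (Vtype n) := (fun x => (t : ℝ) • x) '' P

/-- Number of lattice points of the `t`-th dilate. -/
noncomputable def latticeCount {n : ℕ} (P : Set (Vtype n)) (t : ℕ) : ℕ :=
  Set.ncard {x ∈ dilate t P | ∀ i, ∃ z : ℤ, x i = (z : ℝ)}

/-- Dimension of the affine span of a set. -/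
noncomputable def polyDim {n : ℕ} (P : Set (Vtype n)) : ℕ :=
  Module.finrank ℝ (affineSpan ℝ P).direction

/-- The points `0` and `e_i - e_j`, `(i,j) ∈ F`. -/
def vertSet {n : ℕ} (F : EdgeSet n) : Set (Vtype n) :=
  {0} ∪ {v | ∃ e ∈ F, v = ev e.1 e.2}

/-- `e ≤ f` where edges are ordered by first coordinate, then second coordinate. -/
def edgeLE {n : ℕ} (e f : Edge n) : Prop :=
  e.1 < f.1 ∨ (e.1 = f.1 ∧ e.2 ≤ f.2)

/-- `A <lex B`: at the first position where the increasing edge lists of `A` and `B`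
differ, the edge of `A` is smaller; equivalently (for sets of equal size), the smallest
edge in the symmetric difference belongs to `A`. -/
def treeLexLT {n : ℕ} (A B : EdgeSet n) : Prop :=
  ∃ e ∈ A, e ∉ B ∧ ∀ f ∈ (A \ B) ∪ (B \ A), edgeLE e f

/-!
For an alternating graph `F`, every vertex is a source or a sink, so `Φ⁺ ∩ C(F)` consists of the
vectors of `F` alone and `P(F)` is the set of `∑ c_e (e_i - e_j)` with weights `c ≥ 0` on `F` of
total at most `1`. The positive and negative parts of the coordinates of such a vector are the row
and column sums of `c`, and on noncrossing graphs these sums determine `c`: where two weightings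
first differ, comparing shorter edges first, a row and a column would contribute crossing edges.
Hence `P(A) ∩ P(B) = P(A ∩ B)` for noncrossing alternating `A` and `B`.

It remains to find, whenever `A <lex B`, an edge `e ∈ B \ A` such that `B - e` lies in some
`C <lex B`. Let `(p,q)` be the smallest edge in which `A` and `B` differ. Then `B` has consecutive
left neighbours `i' < i` of a common vertex `j` with `p ≤ i'` and `i ≤ q < j`, such that the last
right neighbour `k` of `i` before `j` (or `i` itself) satisfies `q ≤ k`. Replace `(i,j)` by
`(i',k)`. The new edge lies in `T̄` because overlapping increasing paths of a noncrossing graph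
meet.
-/

theorem exists_isGreatest_of_nonempty {α : Type*} [LinearOrder α] [Finite α] {s : Set α}
    (hs : s.Nonempty) : ∃ x, IsGreatest s x :=
  Set.exists_max_image s id s.toFinite hs

theorem exists_rel_of_reflTransGen {α : Type*} {r : α → α → Prop} {P : α → Prop} {a b : α}
    (h : Relation.ReflTransGen r a b) (ha : P a) (hb : ¬ P b) :
    ∃ u v, Relation.ReflTransGen r a u ∧ r u v ∧ Relation.ReflTransGen r v b ∧ P u ∧ ¬ P v := by
  induction h with
  | refl => exact absurd ha hb
  | @tail c d hac hcd ih =>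
    by_cases hc : P c
    · exact ⟨c, d, hac, hcd, .refl, hc, hb⟩
    · obtain ⟨u, v, hau, huv, hvc, hu, hv⟩ := ih hc
      exact ⟨u, v, hau, huv, hvc.tail hcd, hu, hv⟩

theorem connected_of_adj_reachable {V : Type*} {G H : SimpleGraph V} (hG : G.Connected)
    (h : ∀ u v, G.Adj u v → H.Reachable u v) : H.Connected := by
  have := hG.nonempty
  refine ⟨fun u v => ?_⟩
  obtain ⟨walk⟩ := hG.preconnected u v
  induction walk with
  | nil => exact .refl _
  | cons hadj _ ih => exact (h _ _ hadj).trans ih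

theorem exists_lt_of_sum_eq_of_lt {ι M : Type*} [Fintype ι] [AddCommMonoid M] [LinearOrder M]
    [IsOrderedCancelAddMonoid M] {f g : ι → M} (hsum : ∑ l, f l = ∑ l, g l) {j : ι}
    (hj : f j < g j) : ∃ l, g l < f l := by
  by_contra! h
  exact hj.ne ((Finset.sum_eq_sum_iff_of_le fun l _ => h l).1 hsum j (Finset.mem_univ j))

theorem sum_smul_mem_of_convex {ι R E : Type*} [Field R] [LinearOrder R] [IsStrictOrderedRing R]
    [AddCommGroup E] [Module R E] {s : Set E} (hs : Convex R s) (h0 : 0 ∈ s) {t : Finset ι}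
    {w : ι → R} {z : ι → E} (hw : ∀ i ∈ t, 0 ≤ w i) (hw1 : ∑ i ∈ t, w i ≤ 1)
    (hz : ∀ i ∈ t, z i ∈ s) : ∑ i ∈ t, w i • z i ∈ s := by
  have h := hs.sum_mem (t := Finset.insertNone t) (w := fun o => o.elim (1 - ∑ i ∈ t, w i) w)
    (z := fun o => o.elim 0 z) ?_ ?_ ?_
  · simpa only [Finset.sum_insertNone, Option.elim, smul_zero, zero_add] using h
  · exact Finset.forall_mem_insertNone.2 ⟨sub_nonneg.2 hw1, hw⟩
  · simp only [Finset.sum_insertNone, Option.elim, sub_add_cancel]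
  · exact Finset.forall_mem_insertNone.2 ⟨h0, hz⟩

section Graphs

variable {n : ℕ} {E F A B : EdgeSet n}

theorem IsGraph.mono (hF : IsGraph F) (h : E ⊆ F) : IsGraph E := fun e he => hF e (h he)

theorem Alternating.mono (hF : Alternating F) (h : E ⊆ F) : Alternating E :=
  fun ⟨i, j, k, hlt, hlt', hij, hjk⟩ => hF ⟨i, j, k, hlt, hlt', h hij, h hjk⟩

theorem Noncrossing.le (hE : Noncrossing E) {i j k l : Fin (n + 1)} (hik : (i, k) ∈ E)
    (hjl : (j, l) ∈ E) (hij : i < j) (hjk : j < k) : l ≤ k :=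
  not_lt.1 fun hkl => hE ⟨i, j, k, l, hij, hjk, hkl, hik, hjl⟩

theorem Alternating.notMem_of_mem (hE : Alternating E) (hG : IsGraph E) {i j k : Fin (n + 1)}
    (hij : (i, j) ∈ E) : (j, k) ∉ E :=
  fun hjk => hE ⟨i, j, k, hG _ hij, hG _ hjk, hij, hjk⟩

theorem edgeLE_iff_toLex_le {e f : Edge n} : edgeLE e f ↔ toLex e ≤ toLex f :=
  Prod.Lex.toLex_le_toLex.symm

theorem treeLexLT.asymm (hAB : treeLexLT A B) : ¬ treeLexLT B A := by
  rintro ⟨f, hfB, hfA, hf⟩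
  obtain ⟨e, heA, heB, he⟩ := hAB
  have hef := edgeLE_iff_toLex_le.1 (he f (by simp [hfA, hfB]))
  have hfe := edgeLE_iff_toLex_le.1 (hf e (by simp [heA, heB]))
  exact heB (toLex.injective (hef.antisymm hfe) ▸ hfB)

end Graphs

section Reachability

variable {n : ℕ} {T : EdgeSet n}

/-- Reachability along increasing paths of `T`, the path of length zero included; together with
`i < j` it describes the edges `(i, j)` of the transitive closure. -/
abbrev IncReach (T : EdgeSet n) : Fin (n + 1) → Fin (n + 1) → Prop :=
  Relation.ReflTransGen fun a b => a < b ∧ (a, b) ∈ T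

theorem mem_closureT_iff {e : Edge n} : e ∈ closureT T ↔ e.1 < e.2 ∧ IncReach T e.1 e.2 := by
  refine and_congr_right fun he => ⟨Relation.TransGen.to_reflTransGen, fun h => ?_⟩
  exact (Relation.reflTransGen_iff_eq_or_transGen.1 h).resolve_left he.ne'

theorem IncReach.le {a b : Fin (n + 1)} (h : IncReach T a b) : a ≤ b := by
  induction h with
  | refl => exact le_rfl
  | tail _ hbc hab => exact hab.trans hbc.1.le

theorem IncReach.exists_common_vertex (hT : Noncrossing T) {p q i k : Fin (n + 1)}
    (hpq : IncReach T p q) (hik : IncReach T i k) (hpi : p ≤ i) (hiq : i ≤ q) (hqk : q ≤ k) :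
    ∃ v, IncReach T p v ∧ IncReach T v q ∧ IncReach T i v ∧ IncReach T v k := by
  rcases hiq.eq_or_lt with rfl | hiq
  · exact ⟨i, hpq, .refl, .refl, hik⟩
  obtain ⟨u, v, hpu, huv, hvq, hui, hiv⟩ :=
    exists_rel_of_reflTransGen (P := (· ≤ i)) hpq hpi hiq.not_ge
  rw [not_le] at hiv
  rcases hui.eq_or_lt with rfl | hui
  · exact ⟨u, hpu, .head huv hvq, .refl, hik⟩
  obtain ⟨s, t, his, hst, htk, hsv, hvt⟩ :=
    exists_rel_of_reflTransGen (P := (· < v)) hik hiv ((IncReach.le hvq).trans hqk).not_gt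
  obtain rfl : t = v :=
    (hT.le huv.2 hst.2 (hui.trans_le (IncReach.le his)) hsv).antisymm (not_lt.1 hvt)
  exact ⟨t, hpu.tail huv, hvq, his.tail hst, htk⟩

theorem IncReach.uncross (hT : Noncrossing T) {p q i k : Fin (n + 1)} (hpq : IncReach T p q)
    (hik : IncReach T i k) (hpi : p ≤ i) (hiq : i ≤ q) (hqk : q ≤ k) :
    IncReach T p k ∧ IncReach T i q := by
  obtain ⟨v, hpv, hvq, hiv, hvk⟩ := hpq.exists_common_vertex hT hik hpi hiq hqk
  exact ⟨hpv.trans hvk, hiv.trans hvq⟩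

end Reachability

section Trees

variable {n : ℕ} {E B : EdgeSet n}

theorem toSG_adj_of_mem (hE : IsGraph E) {a b : Fin (n + 1)} (hab : (a, b) ∈ E) :
    (toSG E).Adj a b :=
  (SimpleGraph.fromRel_adj _ _ _).2 ⟨(hE _ hab).ne, .inl hab⟩

theorem edgeSet_toSG (hE : IsGraph E) :
    (toSG E).edgeSet = (fun e : Edge n => s(e.1, e.2)) '' E := by
  ext z
  induction z using Sym2.ind with
  | _ a b =>
    constructor
    · rintro ⟨-, hab | hba⟩
      · exact ⟨(a, b), hab, rfl⟩
      · exact ⟨(b, a), hba, Sym2.eq_swap⟩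
    · rintro ⟨e, he, hab⟩
      exact hab ▸ toSG_adj_of_mem hE he

theorem IsGraph.injOn_sym2 (hE : IsGraph E) : Set.InjOn (fun e : Edge n => s(e.1, e.2)) E := by
  rintro ⟨a, b⟩ hab ⟨c, d⟩ hcd h
  rcases Sym2.eq_iff.1 h with ⟨rfl, rfl⟩ | ⟨rfl, rfl⟩
  · rfl
  · exact absurd (hE _ hab) (hE _ hcd).not_gt

theorem card_edgeSet_toSG (hE : IsGraph E) : Nat.card (toSG E).edgeSet = E.card := by
  rw [edgeSet_toSG hE, Nat.card_coe_set_eq, hE.injOn_sym2.ncard_image, Set.ncard_coe_finset]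

theorem IsTreeG.exists_mem_cut (hB : IsTreeG B) {S : Set (Fin (n + 1))} {u w : Fin (n + 1)}
    (hu : u ∈ S) (hw : w ∉ S) : ∃ a b, (a, b) ∈ B ∧ (a ∈ S ∧ b ∉ S ∨ a ∉ S ∧ b ∈ S) := by
  obtain ⟨walk⟩ := hB.2.connected.preconnected u w
  obtain ⟨d, -, hfst, hsnd⟩ := walk.exists_boundary_dart S hu hw
  rcases ((SimpleGraph.fromRel_adj _ _ _).1 d.adj).2 with h | h
  · exact ⟨_, _, h, .inl ⟨hfst, hsnd⟩⟩
  · exact ⟨_, _, h, .inr ⟨hsnd, hfst⟩⟩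

theorem IsTreeG.insert_erase (hB : IsTreeG B) {e f : Edge n} (he : e ∈ B) (hf : f ∉ B)
    (hlt : f.1 < f.2) (hreach : (toSG (insert f (B.erase e))).Reachable e.1 e.2) :
    IsTreeG (insert f (B.erase e)) := by
  have hG : IsGraph (insert f (B.erase e)) :=
    (Finset.forall_mem_insert _ _ _).2 ⟨hlt, hB.1.mono (B.erase_subset e)⟩
  have hmem_reach : ∀ a b, (a, b) ∈ B → (toSG (insert f (B.erase e))).Reachable a b := by
    intro a b hab
    by_cases h : (a, b) = e
    · exact h ▸ hreach
    · exact (toSG_adj_of_mem hG (by simp [h, hab])).reachable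
  obtain ⟨hconn, hcard⟩ := SimpleGraph.isTree_iff_connected_and_card.1 hB.2
  refine ⟨hG, SimpleGraph.isTree_iff_connected_and_card.2
    ⟨connected_of_adj_reachable hconn fun u v huv => ?_, ?_⟩⟩
  · rcases ((SimpleGraph.fromRel_adj _ _ _).1 huv).2 with h | h
    · exact hmem_reach u v h
    · exact (hmem_reach v u h).symm
  · rw [card_edgeSet_toSG hB.1] at hcard
    rw [card_edgeSet_toSG hG, Finset.card_insert_of_notMem (by simp [hf]),
      Finset.card_erase_add_one he, hcard]

end Trees

section RightNeighbours

variable {n : ℕ} {B : EdgeSet n}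

/-- The closed right neighbourhood of a vertex: `i` and the vertices `b` with `(i, b) ∈ B`.
Including `i` makes the last right neighbour of `i`, if there is none, default to `i`. -/
def rightNbhd (B : EdgeSet n) (i : Fin (n + 1)) : Set (Fin (n + 1)) := insert i {b | (i, b) ∈ B}

theorem self_mem_rightNbhd (i : Fin (n + 1)) : i ∈ rightNbhd B i := Set.mem_insert i _

theorem le_of_mem_Icc_of_isGreatest_rightNbhd (hG : IsGraph B) (hN : Noncrossing B)
    (hA : Alternating B) {u s a b : Fin (n + 1)} (hs : IsGreatest (rightNbhd B u) s)
    (ha : a ∈ Set.Icc u s) (hab : (a, b) ∈ B) : b ≤ s := by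
  rcases ha.1.eq_or_lt with rfl | hua
  · exact hs.2 (.inr hab)
  rcases hs.1 with rfl | hus
  · exact absurd ha.2 hua.not_ge
  rcases ha.2.eq_or_lt with rfl | has
  · exact absurd hab (hA.notMem_of_mem hG hus)
  · exact hN.le hus hab hua has

theorem eq_of_lt_of_mem_Icc_of_isGreatest_rightNbhd (hG : IsGraph B) (hN : Noncrossing B)
    (hA : Alternating B) {u s a b : Fin (n + 1)} (hs : IsGreatest (rightNbhd B u) s)
    (hau : a < u) (hb : b ∈ Set.Icc u s) (hab : (a, b) ∈ B) : b = s := by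
  rcases hs.1 with rfl | hus
  · exact le_antisymm hb.2 hb.1
  rcases hb.1.eq_or_lt with rfl | hub
  · exact absurd hus (hA.notMem_of_mem hG hab)
  · exact hb.2.antisymm (hN.le hab hus hau hub)

theorem IsTreeG.exists_lt_mem_of_isGreatest_rightNbhd (hB : IsTreeG B) (hN : Noncrossing B)
    (hA : Alternating B) {u s w : Fin (n + 1)} (hs : IsGreatest (rightNbhd B u) s)
    (hw : w ∉ Set.Icc u s) : ∃ a < u, (a, s) ∈ B := by
  obtain ⟨a, b, hab, ⟨ha, hb⟩ | ⟨ha, hb⟩⟩ :=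
    hB.exists_mem_cut (S := Set.Icc u s) ⟨le_rfl, hs.2 (self_mem_rightNbhd _)⟩ hw
  · exact absurd ⟨ha.1.trans (hB.1 _ hab).le,
      le_of_mem_Icc_of_isGreatest_rightNbhd hB.1 hN hA hs ha hab⟩ hb
  · have hau : a < u := by
      by_contra! hua
      exact ha ⟨hua, (hB.1 _ hab).le.trans hb.2⟩
    obtain rfl := eq_of_lt_of_mem_Icc_of_isGreatest_rightNbhd hB.1 hN hA hs hau hb hab
    exact ⟨a, hau, hab⟩

theorem IsTreeG.mem_of_isGreatest_of_covBy (hB : IsTreeG B) (hN : Noncrossing B)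
    (hA : Alternating B) {i j k u : Fin (n + 1)} (hij : (i, j) ∈ B)
    (hk : IsGreatest (rightNbhd B i ∩ Set.Iio j) k) (hku : k ⋖ u) (huj : u < j) : (u, j) ∈ B := by
  have hik : i ≤ k := hk.2 ⟨self_mem_rightNbhd _, hB.1 _ hij⟩
  obtain ⟨s, hs⟩ := exists_isGreatest_of_nonempty ⟨u, self_mem_rightNbhd (B := B) u⟩
  have hus : u ≤ s := hs.2 (self_mem_rightNbhd _)
  obtain ⟨a, hau, has⟩ := hB.exists_lt_mem_of_isGreatest_rightNbhd hN hA hs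
    fun h : k ∈ Set.Icc u s => hku.lt.not_ge h.1
  suffices hjs : j ≤ s by
    have hus' : (u, s) ∈ B := hs.1.resolve_left (huj.trans_le hjs).ne'
    exact (hN.le hij hus' (hik.trans_lt hku.lt) huj).antisymm hjs ▸ hus'
  by_contra! hsj
  rcases lt_trichotomy a i with hai | rfl | hia
  · exact hsj.not_ge (hN.le has hij hai ((hik.trans_lt hku.lt).trans_le hus))
  · exact (hku.lt.trans_le hus).not_ge (hk.2 ⟨.inr has, hsj⟩)
  · have hak : a ≤ k := hku.le_of_lt hau
    have hikB : (i, k) ∈ B := hk.1.1.resolve_left (hia.trans_le hak).ne'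
    rcases hak.eq_or_lt with rfl | hak
    · exact hA.notMem_of_mem hB.1 hikB has
    · exact (hku.lt.trans_le hus).not_ge (hN.le hikB has hia hak)

end RightNeighbours

section Flips

variable {n : ℕ} {T A B : EdgeSet n} {p q i' i k j : Fin (n + 1)}

/-- The configuration of a lexicographically decreasing flip of `B`, in which the edge `(i, j)` is
replaced by `(i', k)`: `i'` is the left neighbour of `j` preceding `i`, and `k` is the last right
neighbour of `i` before `j`, or `i` if there is none. -/
structure IsFlip (B : EdgeSet n) (i' i k j : Fin (n + 1)) : Prop where
  mem : (i, j) ∈ B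
  isGreatest_left : IsGreatest {a | a < i ∧ (a, j) ∈ B} i'
  isGreatest_right : IsGreatest (rightNbhd B i ∩ Set.Iio j) k

namespace IsFlip

theorem left_lt (h : IsFlip B i' i k j) : i' < i := h.isGreatest_left.1.1

theorem left_mem (h : IsFlip B i' i k j) : (i', j) ∈ B := h.isGreatest_left.1.2

theorem right_lt (h : IsFlip B i' i k j) : k < j := h.isGreatest_right.1.2

theorem right_eq_or_mem (h : IsFlip B i' i k j) : k = i ∨ (i, k) ∈ B := h.isGreatest_right.1.1

theorem le_right (h : IsFlip B i' i k j) (hG : IsGraph B) : i ≤ k :=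
  h.isGreatest_right.2 ⟨self_mem_rightNbhd _, hG _ h.mem⟩

theorem le_of_mem_of_lt (h : IsFlip B i' i k j) {b : Fin (n + 1)} (hib : (i, b) ∈ B)
    (hbj : b < j) : b ≤ k :=
  h.isGreatest_right.2 ⟨.inr hib, hbj⟩

theorem left_lt_right (h : IsFlip B i' i k j) (hG : IsGraph B) : i' < k :=
  h.left_lt.trans_le (h.le_right hG)

theorem notMem (h : IsFlip B i' i k j) (hG : IsGraph B) (hN : Noncrossing B)
    (hA : Alternating B) : (i', k) ∉ B := by
  intro hi'k
  rcases (h.le_right hG).eq_or_lt with rfl | hik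
  · exact hA.notMem_of_mem hG hi'k h.mem
  · exact h.right_lt.not_ge (hN.le hi'k h.mem h.left_lt hik)

theorem isTreeG_insert_erase (h : IsFlip B i' i k j) (hB : IsTreeG B) (hN : Noncrossing B)
    (hA : Alternating B) : IsTreeG (insert (i', k) (B.erase (i, j))) := by
  have hi'k := h.left_lt_right hB.1
  have hreach : ∀ a b, a < b → (a, b) ∈ insert (i', k) (B.erase (i, j)) →
      (toSG (insert (i', k) (B.erase (i, j)))).Reachable a b := fun a b hab hmem =>
    ((SimpleGraph.fromRel_adj _ _ _).2 ⟨hab.ne, .inl hmem⟩ : SimpleGraph.Adj _ a b).reachable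
  refine hB.insert_erase h.mem (h.notMem hB.1 hN hA) hi'k ?_
  have hik_reach : (toSG (insert (i', k) (B.erase (i, j)))).Reachable i k := by
    rcases h.right_eq_or_mem with hik | hik
    · rw [hik]
    · exact hreach i k (hB.1 _ hik) (by simp [hik, h.right_lt.ne])
  exact (hik_reach.trans (hreach i' k hi'k (by simp)).symm).trans
    (hreach i' j (hB.1 _ h.left_mem) (by simp [h.left_mem, h.left_lt.ne]))

theorem le_of_mem_of_mem_Ioo (h : IsFlip B i' i k j) (hG : IsGraph B) (hN : Noncrossing B)
    {a b : Fin (n + 1)} (hab : (a, b) ∈ B) (hne : (a, b) ≠ (i, j))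
    (ha : a ∈ Set.Ioo i' k) : b ≤ k := by
  have hbj : b ≤ j := hN.le h.left_mem hab ha.1 (ha.2.trans h.right_lt)
  rcases lt_trichotomy a i with hai | rfl | hia
  · rcases hbj.eq_or_lt with rfl | hbj
    · exact absurd (h.isGreatest_left.2 ⟨hai, hab⟩) ha.1.not_ge
    · by_contra! hkb
      exact hbj.not_ge (hN.le hab h.mem hai ((h.le_right hG).trans_lt hkb))
  · exact h.le_of_mem_of_lt hab (hbj.lt_of_ne fun hb => hne (by rw [hb]))
  · exact hN.le (h.right_eq_or_mem.resolve_left (hia.trans ha.2).ne') hab hia ha.2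

theorem noncrossing_insert_erase (h : IsFlip B i' i k j) (hG : IsGraph B) (hN : Noncrossing B) :
    Noncrossing (insert (i', k) (B.erase (i, j))) := by
  rintro ⟨a, b, c, d, hab, hbc, hcd, hac, hbd⟩
  simp only [Finset.mem_insert, Finset.mem_erase, Prod.mk.injEq] at hac hbd
  rcases hac with ⟨rfl, rfl⟩ | ⟨-, hac⟩ <;> rcases hbd with ⟨rfl, rfl⟩ | ⟨hne, hbd⟩
  · exact hab.false
  · exact hcd.not_ge (h.le_of_mem_of_mem_Ioo hG hN hbd hne ⟨hab, hbc⟩)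
  · exact (hcd.trans h.right_lt).not_ge (hN.le hac h.left_mem hab hbc)
  · exact hcd.not_ge (hN.le hac hbd hab hbc)

theorem alternating_insert_erase (h : IsFlip B i' i k j) (hG : IsGraph B) (hN : Noncrossing B)
    (hA : Alternating B) : Alternating (insert (i', k) (B.erase (i, j))) := by
  rintro ⟨a, b, c, hab, hbc, habB, hbcB⟩
  simp only [Finset.mem_insert, Finset.mem_erase, Prod.mk.injEq] at habB hbcB
  rcases habB with ⟨rfl, rfl⟩ | ⟨-, habB⟩ <;> rcases hbcB with ⟨rfl, rfl⟩ | ⟨hne, hbcB⟩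
  · exact hab.false
  · rcases h.right_eq_or_mem with rfl | hikB
    · have hcj : c ≤ j := hN.le h.left_mem hbcB hab h.right_lt
      exact hbc.not_ge (h.le_of_mem_of_lt hbcB (hcj.lt_of_ne fun hc => hne (by rw [hc])))
    · exact hA.notMem_of_mem hG hikB hbcB
  · exact hA.notMem_of_mem hG habB h.left_mem
  · exact hA.notMem_of_mem hG habB hbcB

theorem treeLexLT_insert_erase (h : IsFlip B i' i k j) (hnew : (i', k) ∉ B) :
    treeLexLT (insert (i', k) (B.erase (i, j))) B := by
  refine ⟨(i', k), by simp, hnew, fun f hf => ?_⟩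
  have hf : f = (i', k) ∨ f = (i, j) := by
    simp only [Finset.mem_union, Finset.mem_sdiff, Finset.mem_insert, Finset.mem_erase] at hf
    tauto
  rcases hf with rfl | rfl
  · exact .inr ⟨rfl, le_rfl⟩
  · exact .inl h.left_lt

end IsFlip

theorem IsTreeG.exists_mem_left (hB : IsTreeG B) (hN : Noncrossing B) (hA : Alternating B)
    (hpj : (p, j) ∈ B) (hpq : p < q) (hqj : q < j) (hgap : ∀ b ∈ Set.Ico q j, (p, b) ∉ B) :
    ∃ i, (p < i ∧ i ≤ q) ∧ (i, j) ∈ B := by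
  obtain ⟨k, hk⟩ := exists_isGreatest_of_nonempty
    (s := rightNbhd B p ∩ Set.Iio j) ⟨p, self_mem_rightNbhd p, hpq.trans hqj⟩
  have hkq : k < q := by
    rcases hk.1.1 with rfl | hpk
    · exact hpq
    · exact not_le.1 fun hqk => hgap k ⟨hqk, hk.1.2⟩ hpk
  obtain ⟨u, hku, huq⟩ := exists_covBy_le_of_lt hkq
  exact ⟨u, ⟨(hk.2 ⟨self_mem_rightNbhd _, hpq.trans hqj⟩).trans_lt hku.lt, huq⟩,
    hB.mem_of_isGreatest_of_covBy hN hA hpj hk hku (huq.trans_lt hqj)⟩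

theorem IsTreeG.exists_isFlip (hB : IsTreeG B) (hN : Noncrossing B) (hA : Alternating B)
    (hpq : p < q) (hpqB : (p, q) ∉ B) (hj : ∃ j, q < j ∧ (p, j) ∈ B) :
    ∃ i' i k j, IsFlip B i' i k j ∧ p ≤ i' ∧ i ≤ q ∧ q ≤ k := by
  obtain ⟨j, ⟨hqj, hpj⟩, hjmin⟩ := (Set.toFinite {j | q < j ∧ (p, j) ∈ B}).bddBelow
    |>.exists_isLeast_of_nonempty hj
  have hgap : ∀ b ∈ Set.Ico q j, (p, b) ∉ B := fun b hb hpb =>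
    hb.2.not_ge (hjmin ⟨hb.1.lt_of_ne (by rintro rfl; exact hpqB hpb), hpb⟩)
  obtain ⟨i, ⟨⟨hpi, hiq⟩, hij⟩, himax⟩ := exists_isGreatest_of_nonempty
    (hB.exists_mem_left hN hA hpj hpq hqj hgap)
  obtain ⟨i', hi'⟩ := exists_isGreatest_of_nonempty (s := {a | a < i ∧ (a, j) ∈ B}) ⟨p, hpi, hpj⟩
  obtain ⟨k, hk⟩ := exists_isGreatest_of_nonempty
    (s := rightNbhd B i ∩ Set.Iio j) ⟨i, self_mem_rightNbhd i, hiq.trans_lt hqj⟩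
  refine ⟨i', i, k, j, ⟨hij, hi', hk⟩, hi'.2 ⟨hpi, hpj⟩, hiq, not_lt.1 fun hkq => ?_⟩
  obtain ⟨u, hku, huq⟩ := exists_covBy_le_of_lt hkq
  have hik : i ≤ k := hk.2 ⟨self_mem_rightNbhd _, hiq.trans_lt hqj⟩
  have huj := hB.mem_of_isGreatest_of_covBy hN hA hij hk hku (huq.trans_lt hqj)
  exact (hik.trans_lt hku.lt).not_ge (himax ⟨⟨hpi.trans_le (hik.trans hku.le), huq⟩, huj⟩)

theorem IsTreeG.exists_lt_mem_of_notMem (hB : IsTreeG B) (hBN : Noncrossing B)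
    (hBA : Alternating B) (hAG : IsGraph A) (hAN : Noncrossing A) (hAA : Alternating A)
    (hpqA : (p, q) ∈ A) (hpqB : (p, q) ∉ B) (hagree : ∀ a b, a < p → (a, b) ∈ B → (a, b) ∈ A) :
    ∃ j, q < j ∧ (p, j) ∈ B := by
  have hpq : p < q := hAG _ hpqA
  obtain ⟨s, hs⟩ := exists_isGreatest_of_nonempty ⟨p, self_mem_rightNbhd (B := B) p⟩
  suffices hqs : q ≤ s by
    have hps : (p, s) ∈ B := hs.1.resolve_left (hpq.trans_le hqs).ne'
    exact ⟨s, hqs.lt_of_ne (by rintro rfl; exact hpqB hps), hps⟩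
  by_contra! hsq
  obtain ⟨a, hap, has⟩ := hB.exists_lt_mem_of_isGreatest_rightNbhd hBN hBA hs
    fun h : q ∈ Set.Icc p s => hsq.not_ge h.2
  have hasA := hagree a s hap has
  rcases (hs.2 (self_mem_rightNbhd _) : p ≤ s).eq_or_lt with rfl | hps
  · exact hAA.notMem_of_mem hAG hasA hpqA
  · exact hsq.not_ge (hAN.le hasA hpqA hap hps)

theorem IsFlip.mem_closureT (h : IsFlip B i' i k j) (hT : Noncrossing T) (hG : IsGraph B)
    (hBT : ↑B ⊆ closureT T) (hpq : (p, q) ∈ closureT T) (hpi' : p ≤ i') (hiq : i ≤ q)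
    (hqk : q ≤ k) : (i', k) ∈ closureT T := by
  have hi'q : IncReach T i' q :=
    ((mem_closureT_iff.1 hpq).2.uncross hT (mem_closureT_iff.1 (hBT h.left_mem)).2 hpi'
      (h.left_lt.le.trans hiq) (hqk.trans h.right_lt.le)).2
  have hik : IncReach T i k := by
    rcases h.right_eq_or_mem with rfl | hik
    · exact .refl
    · exact (mem_closureT_iff.1 (hBT hik)).2
  exact mem_closureT_iff.2 ⟨h.left_lt_right hG, (hi'q.uncross hT hik h.left_lt.le hiq hqk).1⟩

theorem exists_erase_subset_of_treeLexLT (hT : Noncrossing T) (hA : A ∈ NCASpanningTrees T)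
    (hB : B ∈ NCASpanningTrees T) (hlt : treeLexLT A B) :
    ∃ e ∈ B, e ∉ A ∧ ∃ C ∈ NCASpanningTrees T, treeLexLT C B ∧ B.erase e ⊆ C := by
  obtain ⟨hAt, hAN, hAA, hAT⟩ := hA
  obtain ⟨hBt, hBN, hBA, hBT⟩ := hB
  obtain ⟨⟨p, q⟩, hpqA, hpqB, hmin⟩ := hlt
  have hagree : ∀ a b, a < p → (a, b) ∈ B → (a, b) ∈ A := by
    intro a b hap hab
    by_contra habA
    rcases hmin (a, b) (by simp [hab, habA]) with hpa | ⟨hpa, -⟩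
    · exact hap.not_gt hpa
    · exact hap.ne' hpa
  obtain ⟨i', i, k, j, hflip, hpi', hiq, hqk⟩ := hBt.exists_isFlip hBN hBA (hAt.1 _ hpqA) hpqB
    (hBt.exists_lt_mem_of_notMem hBN hBA hAt.1 hAN hAA hpqA hpqB hagree)
  have hijA : (i, j) ∉ A := by
    intro hij
    rcases hiq.eq_or_lt with rfl | hiq
    · exact hAA.notMem_of_mem hAt.1 hpqA hij
    · exact (hqk.trans_lt hflip.right_lt).not_ge
        (hAN.le hpqA hij (hpi'.trans_lt hflip.left_lt) hiq)
  have hnew := hflip.notMem hBt.1 hBN hBA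
  have hnewT := hflip.mem_closureT hT hBt.1 hBT (hAT hpqA) hpi' hiq hqk
  have hsub : ↑(insert (i', k) (B.erase (i, j))) ⊆ closureT T := by
    rw [Finset.coe_insert, Set.insert_subset_iff]
    exact ⟨hnewT, (Finset.coe_subset.2 (B.erase_subset _)).trans hBT⟩
  exact ⟨(i, j), hflip.mem, hijA, insert (i', k) (B.erase (i, j)),
    ⟨hflip.isTreeG_insert_erase hBt hBN hBA, hflip.noncrossing_insert_erase hBt.1 hBN,
      hflip.alternating_insert_erase hBt.1 hBN hBA, hsub⟩,
    hflip.treeLexLT_insert_erase hnew, Finset.subset_insert _ _⟩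

end Flips

section Weights

variable {n : ℕ} {A B : EdgeSet n} {a b c : Edge n → ℝ}

/-- The nonnegative edge weightings supported on `A`: the coefficients of the vectors in `C(A)`. -/
structure IsWeightOn (A : EdgeSet n) (c : Edge n → ℝ) : Prop where
  nonneg : 0 ≤ c
  eq_zero : ∀ e ∉ A, c e = 0

/-- The vector `∑ c_e (e_i - e_j)` of a weighting `c` of the pairs `e = (i, j)`, as a linear map. -/
def rootSum : (Edge n → ℝ) →ₗ[ℝ] Vtype n := Fintype.linearCombination ℝ fun e => ev e.1 e.2

theorem rootSum_single (e : Edge n) : rootSum (Pi.single e 1) = ev e.1 e.2 := by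
  rw [rootSum, Fintype.linearCombination_apply_single, one_smul]

theorem rootSum_apply (c : Edge n → ℝ) (i : Fin (n + 1)) :
    rootSum c i = ∑ l, c (i, l) - ∑ l, c (l, i) := by
  simp [rootSum, Fintype.linearCombination_apply, Fintype.sum_prod_type, ev, mul_sub,
    Pi.single_apply, Finset.sum_sub_distrib, Finset.sum_comm (γ := Fin (n + 1))]

namespace IsWeightOn

theorem single {e : Edge n} (he : e ∈ A) : IsWeightOn A (Pi.single e 1) where
  nonneg := Pi.single_nonneg.2 zero_le_one
  eq_zero f hf := Pi.single_eq_of_ne (by rintro rfl; exact hf he) 1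

theorem mem_of_ne_zero (hc : IsWeightOn A c) {e : Edge n} (he : c e ≠ 0) : e ∈ A :=
  not_imp_comm.1 (hc.eq_zero e) he

theorem rootSum_eq_sum (hc : IsWeightOn A c) : rootSum c = ∑ e ∈ A, c e • ev e.1 e.2 :=
  (Finset.sum_subset (Finset.subset_univ A) fun e _ he => by
    rw [hc.eq_zero e he, zero_smul]).symm

theorem row_eq_zero_or_col_eq_zero (hG : IsGraph A) (hA : Alternating A) (hc : IsWeightOn A c)
    (i : Fin (n + 1)) : (∀ l, c (i, l) = 0) ∨ ∀ l, c (l, i) = 0 := by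
  by_contra! h
  obtain ⟨⟨l, hl⟩, m, hm⟩ := h
  exact hA.notMem_of_mem hG (hc.mem_of_ne_zero hm) (hc.mem_of_ne_zero hl)

theorem sum_row_eq_posPart (hG : IsGraph A) (hA : Alternating A) (hc : IsWeightOn A c)
    (i : Fin (n + 1)) : ∑ l, c (i, l) = (rootSum c i)⁺ := by
  have hrow : 0 ≤ ∑ l, c (i, l) := Finset.sum_nonneg fun l _ => hc.nonneg _
  have hcol : 0 ≤ ∑ l, c (l, i) := Finset.sum_nonneg fun l _ => hc.nonneg _
  rw [rootSum_apply]
  rcases hc.row_eq_zero_or_col_eq_zero hG hA i with h | h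
  · simp only [h, Finset.sum_const_zero, zero_sub]
    exact (posPart_eq_zero.2 (neg_nonpos.2 hcol)).symm
  · simp only [h, Finset.sum_const_zero, sub_zero]
    exact (posPart_eq_self.2 hrow).symm

theorem sum_col_eq_negPart (hG : IsGraph A) (hA : Alternating A) (hc : IsWeightOn A c)
    (i : Fin (n + 1)) : ∑ l, c (l, i) = (rootSum c i)⁻ := by
  have hparts := posPart_sub_negPart (rootSum c i)
  rw [← hc.sum_row_eq_posPart hG hA, rootSum_apply] at hparts
  rw [rootSum_apply]
  linarith

theorem le_of_forall_shorter_eq (hAN : Noncrossing A) (hBG : IsGraph B) (ha : IsWeightOn A a)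
    (hb : IsWeightOn B b) (hrow : ∀ i, ∑ l, a (i, l) = ∑ l, b (i, l))
    (hcol : ∀ j, ∑ l, a (l, j) = ∑ l, b (l, j)) {i j : Fin (n + 1)}
    (hshort : ∀ i' j', (OrderDual.toDual i', j') < (OrderDual.toDual i, j) →
      a (i', j') = b (i', j')) : b (i, j) ≤ a (i, j) := by
  by_contra! hlt
  have hij : i < j := hBG _ (hb.mem_of_ne_zero ((ha.nonneg _).trans_lt hlt).ne')
  obtain ⟨l, hl⟩ := exists_lt_of_sum_eq_of_lt (hrow i) hlt
  obtain ⟨m, hm⟩ := exists_lt_of_sum_eq_of_lt (hcol j) hlt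
  have hjl : j < l := by
    by_contra! hlj
    rcases hlj.eq_or_lt with rfl | hlj
    · exact hlt.not_gt hl
    · exact hl.ne' (hshort i l (Prod.mk_lt_mk_iff_right.2 hlj))
  have hmi : m < i := by
    by_contra! him
    rcases him.eq_or_lt with rfl | him
    · exact hlt.not_gt hm
    · exact hm.ne' (hshort m j (Prod.mk_lt_mk_iff_left.2 (OrderDual.toDual_lt_toDual.2 him)))
  exact hAN ⟨m, i, j, l, hmi, hij, hjl, ha.mem_of_ne_zero ((hb.nonneg _).trans_lt hm).ne',
    ha.mem_of_ne_zero ((hb.nonneg _).trans_lt hl).ne'⟩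

theorem eq_of_sums_eq (hAG : IsGraph A) (hAN : Noncrossing A) (hBG : IsGraph B)
    (hBN : Noncrossing B) (ha : IsWeightOn A a) (hb : IsWeightOn B b)
    (hrow : ∀ i, ∑ l, a (i, l) = ∑ l, b (i, l)) (hcol : ∀ j, ∑ l, a (l, j) = ∑ l, b (l, j)) :
    a = b := by
  suffices h : ∀ x : (Fin (n + 1))ᵒᵈ × Fin (n + 1),
      a (OrderDual.ofDual x.1, x.2) = b (OrderDual.ofDual x.1, x.2) from
    funext fun e => h (OrderDual.toDual e.1, e.2)
  intro x
  induction x using WellFoundedLT.induction with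
  | _ x ih =>
    have hshort : ∀ i' j', (OrderDual.toDual i', j') < x → a (i', j') = b (i', j') :=
      fun i' j' => ih (OrderDual.toDual i', j')
    exact (hb.le_of_forall_shorter_eq hBN hAG ha (fun i => (hrow i).symm) (fun j => (hcol j).symm)
      fun i' j' hlt => (hshort i' j' hlt).symm).antisymm
        (ha.le_of_forall_shorter_eq hAN hBG hb hrow hcol hshort)

theorem eq_of_rootSum_eq (hAG : IsGraph A) (hAN : Noncrossing A) (hAA : Alternating A)
    (hBG : IsGraph B) (hBN : Noncrossing B) (hBA : Alternating B) (ha : IsWeightOn A a)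
    (hb : IsWeightOn B b) (h : rootSum a = rootSum b) : a = b := by
  refine ha.eq_of_sums_eq hAG hAN hBG hBN hb (fun i => ?_) fun j => ?_
  · rw [ha.sum_row_eq_posPart hAG hAA, hb.sum_row_eq_posPart hBG hBA, h]
  · rw [ha.sum_col_eq_negPart hAG hAA, hb.sum_col_eq_negPart hBG hBA, h]

end IsWeightOn

end Weights

section RootPolytopes

variable {n : ℕ} {A B E F : EdgeSet n} {x : Vtype n}

theorem mem_cone_iff : x ∈ cone F ↔ ∃ c, IsWeightOn F c ∧ rootSum c = x := by
  constructor
  · rintro ⟨c, hc, rfl⟩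
    refine ⟨fun e => if e ∈ F then c e else 0, ⟨fun e => ?_, fun e he => if_neg he⟩, ?_⟩
    · exact ite_nonneg (hc e) le_rfl
    · simp [rootSum, Fintype.linearCombination_apply, Finset.sum_ite_mem, ite_smul]
  · rintro ⟨c, hc, rfl⟩
    exact ⟨c, hc.nonneg, hc.rootSum_eq_sum⟩

theorem rootPoly_mono (h : E ⊆ F) : RootPoly E ⊆ RootPoly F := by
  have hcone : cone E ⊆ cone F := fun x hx => by
    obtain ⟨c, hc, hcx⟩ := mem_cone_iff.1 hx
    exact mem_cone_iff.2 ⟨c, ⟨hc.nonneg, fun e he => hc.eq_zero e (mt (@h e) he)⟩, hcx⟩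
  exact convexHull_mono (Set.union_subset_union_right _ (Set.inter_subset_inter_right _ hcone))

theorem vbar_eq_image (hG : IsGraph F) (hF : Alternating F) :
    Vbar F = (fun e => ev e.1 e.2) '' (F : Set (Edge n)) := by
  ext x
  constructor
  · rintro ⟨⟨i, j, hij, rfl⟩, hx⟩
    obtain ⟨c, hc, hcx⟩ := mem_cone_iff.1 hx
    have hrow : 0 < ∑ l, c (i, l) := by
      rw [hc.sum_row_eq_posPart hG hF, hcx]
      simp [ev, hij.ne]
    obtain ⟨l, -, hl⟩ := Finset.exists_ne_zero_of_sum_ne_zero hrow.ne'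
    have hcol : 0 < ∑ m, c (m, l) := Finset.sum_pos' (fun m _ => hc.nonneg _)
      ⟨i, Finset.mem_univ _, (hc.nonneg _).lt_of_ne' hl⟩
    rw [hc.sum_col_eq_negPart hG hF, hcx, negPart_pos_iff] at hcol
    obtain rfl : l = j := by
      by_contra hlj
      have hnonneg : (0 : Vtype n) ≤ Pi.single i 1 := Pi.single_nonneg.2 zero_le_one
      rw [ev, Pi.sub_apply, Pi.single_eq_of_ne hlj, sub_zero] at hcol
      exact hcol.not_ge (hnonneg l)
    exact ⟨(i, l), hc.mem_of_ne_zero hl, rfl⟩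
  · rintro ⟨e, he, rfl⟩
    exact ⟨⟨e.1, e.2, hG e he, rfl⟩,
      mem_cone_iff.2 ⟨Pi.single e 1, .single he, rootSum_single e⟩⟩

theorem convex_setOf_isWeightOn_sum_le_one :
    Convex ℝ {c | IsWeightOn F c ∧ ∑ e, c e ≤ 1} := by
  rintro c ⟨hc, hc1⟩ d ⟨hd, hd1⟩ s t hs ht hst
  refine ⟨⟨fun e => ?_, fun e he => ?_⟩, ?_⟩
  · exact add_nonneg (mul_nonneg hs (hc.nonneg e)) (mul_nonneg ht (hd.nonneg e))
  · simp [hc.eq_zero e he, hd.eq_zero e he]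
  · calc ∑ e, (s • c + t • d) e = s * ∑ e, c e + t * ∑ e, d e := by
          simp [Finset.sum_add_distrib, Finset.mul_sum]
      _ ≤ s * 1 + t * 1 := by gcongr
      _ = 1 := by rw [mul_one, mul_one, hst]

theorem rootPoly_eq_image (hG : IsGraph F) (hF : Alternating F) :
    RootPoly F = rootSum '' {c | IsWeightOn F c ∧ ∑ e, c e ≤ 1} := by
  rw [RootPoly, vbar_eq_image hG hF]
  refine (convexHull_min ?_ (convex_setOf_isWeightOn_sum_le_one.linear_image rootSum)).antisymm ?_
  · rintro x (rfl | ⟨e, he, rfl⟩)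
    · exact ⟨0, ⟨⟨fun e => le_rfl, fun e _ => rfl⟩, by simp⟩, map_zero rootSum⟩
    · exact ⟨Pi.single e 1, ⟨.single he, by simp⟩, rootSum_single e⟩
  · rintro x ⟨c, ⟨hc, hc1⟩, rfl⟩
    rw [hc.rootSum_eq_sum]
    refine sum_smul_mem_of_convex (convex_convexHull ℝ _) (subset_convexHull ℝ _ (.inl rfl))
      (fun e _ => hc.nonneg e) ?_ fun e he => subset_convexHull ℝ _ (.inr ⟨e, he, rfl⟩)
    exact (Finset.sum_le_univ_sum_of_nonneg hc.nonneg).trans hc1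

theorem rootPoly_inter (hAG : IsGraph A) (hAN : Noncrossing A) (hAA : Alternating A)
    (hBG : IsGraph B) (hBN : Noncrossing B) (hBA : Alternating B) :
    RootPoly A ∩ RootPoly B = RootPoly (A ∩ B) := by
  refine Set.Subset.antisymm ?_ (Set.subset_inter (rootPoly_mono Finset.inter_subset_left)
    (rootPoly_mono Finset.inter_subset_right))
  rw [rootPoly_eq_image hAG hAA, rootPoly_eq_image hBG hBA,
    rootPoly_eq_image (hAG.mono Finset.inter_subset_left) (hAA.mono Finset.inter_subset_left)]
  rintro _ ⟨⟨a, ⟨ha, ha1⟩, rfl⟩, b, ⟨hb, -⟩, hba⟩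
  obtain rfl := hb.eq_of_rootSum_eq hBG hBN hBA hAG hAN hAA ha hba
  refine ⟨b, ⟨⟨ha.nonneg, fun e he => ?_⟩, ha1⟩, rfl⟩
  by_contra hbe
  exact he (Finset.mem_inter.2 ⟨ha.mem_of_ne_zero hbe, hb.mem_of_ne_zero hbe⟩)

end RootPolytopes

section Shelling

variable {n : ℕ} {T B : EdgeSet n}

open Classical in
/-- The edges `e` of `B` for which the facet `P(B - e)` lies in `P(C)` for a noncrossing alternating
spanning tree `C` of the transitive closure of `T` that is lexicographically smaller than `B`. -/
noncomputable def shellingEdges (T B : EdgeSet n) : EdgeSet n :=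
  {e ∈ B | ∃ C ∈ NCASpanningTrees T, treeLexLT C B ∧ B.erase e ⊆ C}

theorem mem_shellingEdges {e : Edge n} : e ∈ shellingEdges T B ↔
    e ∈ B ∧ ∃ C ∈ NCASpanningTrees T, treeLexLT C B ∧ B.erase e ⊆ C := by
  classical exact Finset.mem_filter

theorem shellingEdges_nonempty {A : EdgeSet n} (hT : Noncrossing T) (hA : A ∈ NCASpanningTrees T)
    (hB : B ∈ NCASpanningTrees T) (hlt : treeLexLT A B) : (shellingEdges T B).Nonempty := by
  obtain ⟨e, heB, -, hC⟩ := exists_erase_subset_of_treeLexLT hT hA hB hlt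
  exact ⟨e, mem_shellingEdges.2 ⟨heB, hC⟩⟩

theorem rootPoly_inter_iUnion (hT : Noncrossing T) (hB : B ∈ NCASpanningTrees T) :
    RootPoly B ∩ ⋃ A ∈ {A ∈ NCASpanningTrees T | treeLexLT A B}, RootPoly A =
      ⋃ e ∈ shellingEdges T B, RootPoly (B.erase e) := by
  rw [Set.inter_iUnion₂]
  refine Set.Subset.antisymm (Set.iUnion₂_subset fun A ⟨hA, hlt⟩ => ?_)
    (Set.iUnion₂_subset fun e he => ?_)
  · obtain ⟨e, heB, heA, hC⟩ := exists_erase_subset_of_treeLexLT hT hA hB hlt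
    rw [rootPoly_inter hB.1.1 hB.2.1 hB.2.2.1 hA.1.1 hA.2.1 hA.2.2.1]
    have hsub : B ∩ A ⊆ B.erase e := fun f hf => by
      rw [Finset.mem_inter] at hf
      exact Finset.mem_erase.2 ⟨by rintro rfl; exact heA hf.2, hf.1⟩
    exact (rootPoly_mono hsub).trans
      (Set.subset_biUnion_of_mem (u := fun e => RootPoly (B.erase e))
        (Finset.mem_coe.2 (mem_shellingEdges.2 ⟨heB, hC⟩)))
  · obtain ⟨-, C, hC, hlt, hsub⟩ := mem_shellingEdges.1 he
    exact Set.subset_iUnion₂_of_subset C ⟨hC, hlt⟩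
      (Set.subset_inter (rootPoly_mono (B.erase_subset e)) (rootPoly_mono hsub))

end Shelling

theorem stmt17_general {n : ℕ} {T : EdgeSet n} (hT : Noncrossing T) {ι : Type*} [LinearOrder ι]
    (Ts : ι → EdgeSet n) (hmem : ∀ m, Ts m ∈ NCASpanningTrees T)
    (hsurj : ∀ F ∈ NCASpanningTrees T, ∃ m, Ts m = F)
    (hord : ∀ m m', m < m' → treeLexLT (Ts m) (Ts m')) (m : ι) (hm : ¬ IsMin m) :
    ∃ Em ⊆ Ts m, Em.Nonempty ∧
      RootPoly (Ts m) ∩ (⋃ l, ⋃ (_ : l < m), RootPoly (Ts l)) =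
        ⋃ e ∈ Em, RootPoly ((Ts m).erase e) := by
  obtain ⟨l, hl⟩ := not_isMin_iff.1 hm
  have hlt_of_treeLexLT : ∀ l, treeLexLT (Ts l) (Ts m) → l < m := by
    intro l h
    rcases lt_trichotomy l m with hlm | rfl | hml
    · exact hlm
    · exact absurd h h.asymm
    · exact absurd (hord m l hml) h.asymm
  have hpred : ⋃ A ∈ {A ∈ NCASpanningTrees T | treeLexLT A (Ts m)}, RootPoly A =
      ⋃ l, ⋃ (_ : l < m), RootPoly (Ts l) := by
    refine Set.Subset.antisymm (Set.iUnion₂_subset fun A ⟨hA, hlt⟩ => ?_)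
      (Set.iUnion₂_subset fun l hlm => ?_)
    · obtain ⟨l, rfl⟩ := hsurj A hA
      exact Set.subset_iUnion₂_of_subset l (hlt_of_treeLexLT l hlt) subset_rfl
    · exact Set.subset_iUnion₂_of_subset (Ts l) ⟨hmem l, hord l m hlm⟩ subset_rfl
  exact ⟨shellingEdges T (Ts m), fun e he => (mem_shellingEdges.1 he).1,
    shellingEdges_nonempty hT (hmem l) (hmem m) (hord l m hl),
    hpred ▸ rootPoly_inter_iUnion hT (hmem m)⟩

/- STATEMENT 17 -/
theorem stmt17 {n : ℕ} (hn : 1 ≤ n) (T : EdgeSet n) (hT : IsTreeG T)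
    (hnc : Noncrossing T) (k : ℕ) (Ts : Fin k → EdgeSet n)
    (hmem : ∀ m, Ts m ∈ NCASpanningTrees T)
    (huniq : ∀ F ∈ NCASpanningTrees T, ∃! m : Fin k, Ts m = F)
    (hord : ∀ m m' : Fin k, m < m' → treeLexLT (Ts m) (Ts m')) :
    ∀ m : Fin k, 0 < (m : ℕ) →
      ∃ Em : EdgeSet n, Em ⊆ Ts m ∧ Em.Nonempty ∧
        RootPoly (Ts m) ∩ (⋃ l : Fin k, ⋃ (_ : l < m), RootPoly (Ts l)) =
          ⋃ e ∈ Em, RootPoly ((Ts m).erase e) := fun m hm =>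
  stmt17_general hnc Ts hmem (fun F hF => (huniq F hF).exists) hord m
    (not_isMin_iff.2 ⟨⟨0, m.pos⟩, hm⟩)

end RPaper
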